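/- arXiv:1810.05545 — 2 statements merged into one kernel-verified Lean document; each statement's English description precedes it below -/
import Mathlib

section
/- Let A = (L_1,L_2,L_3,L_4) and A' = (L'_1,L'_2,L'_3,L'_4) encode (4,1) valise adinkras with chiralities χ and χ' respectively. If χ ≠ χ', then Σ_{I≠J} trace(L_Iᵀ·L_J·L'_Iᵀ·L'_J) = 0 (the sum over all ordered pairs of distinct I,J ∈ {1,2,3,4}); that is, the gadget OG(A,A') vanishes whenever A and A' have different chirality. -/
open Matrix

/-- A signed permutation matrix: exactly one nonzero entry in each row and column,
that entry being `1` or `-1`. -/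
def IsSignedPerm {n : ℕ} (M : Matrix (Fin n) (Fin n) ℤ) : Prop :=
  (∀ i j, M i j = 0 ∨ M i j = 1 ∨ M i j = -1) ∧
  (∀ i, ∃! j, M i j ≠ 0) ∧
  (∀ j, ∃! i, M i j ≠ 0)

/-- The garden algebra relations for a family of `d × d` integer matrices. -/
def GardenRel {d N : ℕ} (L : Fin N → Matrix (Fin d) (Fin d) ℤ) : Prop :=
  ∀ I J : Fin N,
    (L I * (L J)ᵀ + L J * (L I)ᵀ =
      if I = J then (2 : ℤ) • (1 : Matrix (Fin d) (Fin d) ℤ) else 0) ∧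
    ((L I)ᵀ * L J + (L J)ᵀ * L I =
      if I = J then (2 : ℤ) • (1 : Matrix (Fin d) (Fin d) ℤ) else 0)

/-- The L-matrices of a (4,1) valise adinkra: a quadruple of 4×4 integer signed
permutation matrices satisfying the garden algebra relations. -/
def IsAdinkra (L : Fin 4 → Matrix (Fin 4) (Fin 4) ℤ) : Prop :=
  (∀ I, IsSignedPerm (L I)) ∧ GardenRel L

/-- `Σ_{I≠J} trace(L_Iᵀ·L_J·L'_Iᵀ·L'_J)`, summed over ordered pairs of distinct
`I, J ∈ {1,2,3,4}`; the gadget is `OG(A,A') = -(1/48)` times this quantity. -/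
def gadgetSum (L L' : Fin 4 → Matrix (Fin 4) (Fin 4) ℤ) : ℤ :=
  ∑ I : Fin 4, ∑ J : Fin 4,
    if I ≠ J then Matrix.trace ((L I)ᵀ * L J * (L' I)ᵀ * L' J) else 0

namespace GardenRel

variable {d N : ℕ} {L : Fin N → Matrix (Fin d) (Fin d) ℤ}

theorem mul_transpose_self (h : GardenRel L) (I : Fin N) : L I * (L I)ᵀ = 1 := by
  have h2 := (h I I).1
  rw [if_pos rfl, ← two_smul ℤ] at h2
  exact smul_right_injective _ two_ne_zero h2

theorem transpose_mul_self (h : GardenRel L) (I : Fin N) : (L I)ᵀ * L I = 1 := by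
  have h2 := (h I I).2
  rw [if_pos rfl, ← two_smul ℤ] at h2
  exact smul_right_injective _ two_ne_zero h2

theorem mul_transpose_swap (h : GardenRel L) {I J : Fin N} (hIJ : I ≠ J) :
    L I * (L J)ᵀ = -(L J * (L I)ᵀ) := by
  have h2 := (h I J).1
  rw [if_neg hIJ] at h2
  exact eq_neg_of_add_eq_zero_left h2

theorem transpose_mul_swap (h : GardenRel L) {I J : Fin N} (hIJ : I ≠ J) :
    (L I)ᵀ * L J = -((L J)ᵀ * L I) := by
  have h2 := (h I J).2
  rw [if_neg hIJ] at h2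
  exact eq_neg_of_add_eq_zero_left h2

theorem transpose_mul_sq (h : GardenRel L) {I J : Fin N} (hIJ : I ≠ J) :
    (L I)ᵀ * L J * ((L I)ᵀ * L J) = -1 := by
  nth_rewrite 1 [h.transpose_mul_swap hIJ]
  rw [neg_mul, Matrix.mul_assoc, ← Matrix.mul_assoc (L I), h.mul_transpose_self,
    Matrix.one_mul, h.transpose_mul_self]

/-- Interchanging the two middle factors of a product of four alternating factors. -/
theorem mul_swap_middle (h : GardenRel L) {J K : Fin N} (hJK : J ≠ K) (I M : Fin N) :
    (L I)ᵀ * L K * ((L J)ᵀ * L M) = -((L I)ᵀ * L J * ((L K)ᵀ * L M)) := by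
  rw [Matrix.mul_assoc, ← Matrix.mul_assoc (L K), h.mul_transpose_swap hJK.symm]
  simp only [Matrix.mul_assoc, Matrix.neg_mul, Matrix.mul_neg]

/-- If the product of two bilinears is a scalar, they are proportional. -/
theorem eq_smul_of_mul_eq (h : GardenRel L) {I J K M : Fin N} (hIJ : I ≠ J) {c : ℤ}
    (hc : (L I)ᵀ * L J * ((L K)ᵀ * L M) = -(c • (1 : Matrix (Fin d) (Fin d) ℤ))) :
    (L K)ᵀ * L M = c • ((L I)ᵀ * L J) := by
  have h2 := congrArg (fun X => (L I)ᵀ * L J * X) hc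
  simp only [← Matrix.mul_assoc ((L I)ᵀ * L J) ((L I)ᵀ * L J), h.transpose_mul_sq hIJ] at h2
  rw [neg_one_mul, Matrix.mul_neg, Matrix.mul_smul, Matrix.mul_one] at h2
  exact neg_injective h2

end GardenRel

/-- In a family of four L-matrices of chirality `χ`, complementary bilinears agree up to the
sign `χ` (for the cyclic ordering of the indices `1, 2, 3`). -/
theorem GardenRel.complementary_bilinears {d : ℕ} {L : Fin 4 → Matrix (Fin d) (Fin d) ℤ}
    (h : GardenRel L) {χ : ℤ}
    (hχ : (L 0)ᵀ * L 1 * (L 2)ᵀ * L 3 = -(χ • (1 : Matrix (Fin d) (Fin d) ℤ))) :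
    (L 2)ᵀ * L 3 = χ • ((L 0)ᵀ * L 1) ∧ (L 3)ᵀ * L 1 = χ • ((L 0)ᵀ * L 2) ∧
      (L 1)ᵀ * L 2 = χ • ((L 0)ᵀ * L 3) := by
  rw [Matrix.mul_assoc] at hχ
  have h02 : (L 0)ᵀ * L 2 * ((L 3)ᵀ * L 1) = -(χ • (1 : Matrix (Fin d) (Fin d) ℤ)) := by
    rw [h.transpose_mul_swap (by decide : (3 : Fin 4) ≠ 1), Matrix.mul_neg,
      h.mul_swap_middle (by decide : (1 : Fin 4) ≠ 2), neg_neg, hχ]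
  have h03 : (L 0)ᵀ * L 3 * ((L 1)ᵀ * L 2) = -(χ • (1 : Matrix (Fin d) (Fin d) ℤ)) := by
    rw [h.transpose_mul_swap (by decide : (1 : Fin 4) ≠ 2), Matrix.mul_neg,
      h.mul_swap_middle (by decide : (2 : Fin 4) ≠ 3), neg_neg, h02]
  exact ⟨h.eq_smul_of_mul_eq (by decide) hχ, h.eq_smul_of_mul_eq (by decide) h02,
    h.eq_smul_of_mul_eq (by decide) h03⟩

theorem stmt13 (L L' : Fin 4 → Matrix (Fin 4) (Fin 4) ℤ)
    (hL : IsAdinkra L) (hL' : IsAdinkra L')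
    (χ χ' : ℤ) (hχ : χ = 1 ∨ χ = -1) (hχ' : χ' = 1 ∨ χ' = -1)
    (hchir : (L 0)ᵀ * L 1 * (L 2)ᵀ * L 3 = -(χ • (1 : Matrix (Fin 4) (Fin 4) ℤ)))
    (hchir' : (L' 0)ᵀ * L' 1 * (L' 2)ᵀ * L' 3 = -(χ' • (1 : Matrix (Fin 4) (Fin 4) ℤ)))
    (hne : χ ≠ χ') :
    gadgetSum L L' = 0 := by
  have hprod : χ * χ' = -1 := by
    rcases hχ with rfl | rfl <;> rcases hχ' with rfl | rfl <;> simp_all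
  have hsymm : ∀ I J : Fin 4, I ≠ J →
      trace ((L J)ᵀ * L I * ((L' J)ᵀ * L' I)) = trace ((L I)ᵀ * L J * ((L' I)ᵀ * L' J)) := by
    intro I J hIJ
    rw [hL.2.transpose_mul_swap hIJ, hL'.2.transpose_mul_swap hIJ, neg_mul_neg]
  have hcancel : ∀ V W : Matrix (Fin 4) (Fin 4) ℤ,
      trace ((χ • V) * (χ' • W)) = -trace (V * W) := by
    intro V W
    rw [smul_mul_smul_comm, hprod, neg_one_smul, trace_neg]
  obtain ⟨h23, h31, h12⟩ := hL.2.complementary_bilinears hchir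
  obtain ⟨h23', h31', h12'⟩ := hL'.2.complementary_bilinears hchir'
  have t23 := hcancel ((L 0)ᵀ * L 1) ((L' 0)ᵀ * L' 1)
  have t31 := hcancel ((L 0)ᵀ * L 2) ((L' 0)ᵀ * L' 2)
  have t12 := hcancel ((L 0)ᵀ * L 3) ((L' 0)ᵀ * L' 3)
  rw [← h23, ← h23'] at t23
  rw [← h31, ← h31'] at t31
  rw [← h12, ← h12'] at t12
  have hsum : gadgetSum L L' = ∑ I : Fin 4, ∑ J : Fin 4,
      if I ≠ J then trace ((L I)ᵀ * L J * ((L' I)ᵀ * L' J)) else 0 := by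
    simp only [gadgetSum, Matrix.mul_assoc]
  rw [hsum]
  simp only [Fin.sum_univ_four, ne_eq, Fin.reduceEq, not_true_eq_false, not_false_eq_true,
    if_true, if_false]
  linarith [hsymm 0 1 (by decide), hsymm 0 2 (by decide), hsymm 0 3 (by decide),
    hsymm 1 2 (by decide), hsymm 1 3 (by decide), hsymm 2 3 (by decide)]
end

section
/- Let S be the set of all quadruples (L_1,L_2,L_3,L_4) of 4×4 integer signed permutation matrices satisfying the garden algebra relations. Then among the ordered pairs (A,A') ∈ S × S: exactly 14155776 pairs satisfy SG(A,A') = 32; exactly 14155776 pairs satisfy SG(A,A') = −32; exactly 198180864 pairs satisfy SG(A,A') = 16; exactly 198180864 pairs satisfy SG(A,A') = −16; and exactly 934281216 pairs satisfy SG(A,A') = 0. -/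
open Matrix

/-- The symmetrized gadget `SG(A,A') = Σ trace(L_{I₁}ᵀ·L_{J₁}·L'_{I₂}ᵀ·L'_{J₂})`,
summed over all pairs `I₁ < J₁` and `I₂ < J₂` in `{1,2,3,4}`. -/
def SG (L L' : Fin 4 → Matrix (Fin 4) (Fin 4) ℤ) : ℤ :=
  ∑ I₁ : Fin 4, ∑ J₁ : Fin 4, ∑ I₂ : Fin 4, ∑ J₂ : Fin 4,
    if I₁ < J₁ ∧ I₂ < J₂ then
      Matrix.trace ((L I₁)ᵀ * L J₁ * (L' I₂)ᵀ * L' J₂)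
    else 0

/-- The set of (4,1) valise adinkras, encoded by their L-matrices. -/
def Adinkra41 : Type :=
  {L : Fin 4 → Matrix (Fin 4) (Fin 4) ℤ // IsAdinkra L}

/-- The signed permutation matrix with a given underlying permutation and given row signs. -/
def signedPermMatrix {n : ℕ} (p : Equiv.Perm (Fin n) × (Fin n → ℤˣ)) :
    Matrix (Fin n) (Fin n) ℤ :=
  Matrix.of fun i j => if p.1 i = j then (p.2 i : ℤ) else 0

/-- The units `i`, `j`, `k` of the quaternions acting on `ℤ⁴`, by left multiplication (`false`)
or by right multiplication with the conjugate (`true`). -/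
def quaternionUnit : Bool → Fin 3 → Matrix (Fin 4) (Fin 4) ℤ
  | false, 0 => !![0, -1, 0, 0; 1, 0, 0, 0; 0, 0, 0, -1; 0, 0, 1, 0]
  | false, 1 => !![0, 0, -1, 0; 0, 0, 0, 1; 1, 0, 0, 0; 0, -1, 0, 0]
  | false, 2 => !![0, 0, 0, -1; 0, 0, -1, 0; 0, 1, 0, 0; 1, 0, 0, 0]
  | true, 0 => !![0, 1, 0, 0; -1, 0, 0, 0; 0, 0, 0, -1; 0, 0, 1, 0]
  | true, 1 => !![0, 0, 1, 0; 0, 0, 0, 1; -1, 0, 0, 0; 0, -1, 0, 0]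
  | true, 2 => !![0, 0, 0, 1; 0, 0, -1, 0; 0, 1, 0, 0; -1, 0, 0, 0]

/-- The permutation of `Fin 3` with value `o.2` at `0` that is a rotation or a reflection
according to `o.1`. -/
def dihedralPerm (o : Bool × Fin 3) : Equiv.Perm (Fin 3) where
  toFun i := if o.1 then o.2 + i else o.2 - i
  invFun k := if o.1 then k - o.2 else o.2 - k
  left_inv := by revert o; decide
  right_inv := by revert o; decide

/-- A signed ordering of the three quaternion units of one chirality. -/
abbrev SignedOrder : Type := (Bool × Fin 3) × (Fin 3 → ℤˣ)

/-- The data of an adinkra with first matrix `1`: a chirality and a signed ordering of the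
quaternion units of that chirality. -/
abbrev AdinkraCode : Type := Bool × SignedOrder

/-- The adinkra with first matrix `1` described by a code. -/
def codeMatrix (c : AdinkraCode) : Fin 4 → Matrix (Fin 4) (Fin 4) ℤ :=
  Fin.cons 1 fun i => (c.2.2 i : ℤ) • quaternionUnit c.1 (dihedralPerm c.2.1 i)

/-- The sum `Σ L_Iᵀ L_J` over `I < J`. -/
def halfGadget (L : Fin 4 → Matrix (Fin 4) (Fin 4) ℤ) : Matrix (Fin 4) (Fin 4) ℤ :=
  ∑ I : Fin 4, ∑ J : Fin 4, if I < J then (L I)ᵀ * L J else 0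

/-- The coordinate of the half gadget at the `i`-th quaternion unit of a signed ordering. -/
def orderCoeff (d : SignedOrder) (i : Fin 3) : ℤ :=
  d.2 i + (if (i == 1) = d.1.1 then 1 else -1) * (d.2 (i + 1) * d.2 (i + 2))

/-- The coordinates of the half gadget in the basis of quaternion units. -/
def orderVector (d : SignedOrder) (k : Fin 3) : ℤ :=
  orderCoeff d ((dihedralPerm d.1).symm k)

/-- The symmetrized gadget in terms of the chiralities and coordinates of two half gadgets. -/
def vectorGadget (χ χ' : Bool) (w w' : Fin 3 → ℤ) : ℤ :=
  if χ = χ' then -4 * (w 0 * w' 0 + w 1 * w' 1 + w 2 * w' 2) else 0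

/-- The values of `orderVector`. -/
def orderVectors : Finset (Fin 3 → ℤ) :=
  {w ∈ Fintype.piFinset fun _ => {0, 2, -2} | w ≠ 0 ∧ ∃ k, w k = 0}

/-- The number of signed orderings with a given value of `orderVector` in `orderVectors`. -/
def orderMultiplicity (w : Fin 3 → ℤ) : ℕ :=
  if w 0 * w 0 + w 1 * w 1 + w 2 * w 2 = 4 then 4 else 2

section SignedPerm

variable {n : ℕ} {M : Matrix (Fin n) (Fin n) ℤ}

theorem signedPermMatrix_mul_transpose (p : Equiv.Perm (Fin n) × (Fin n → ℤˣ)) :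
    signedPermMatrix p * (signedPermMatrix p)ᵀ = 1 := by
  ext i j
  rcases eq_or_ne i j with rfl | h
  · simp [signedPermMatrix, Matrix.mul_apply]
  · simp [signedPermMatrix, Matrix.mul_apply, Matrix.one_apply_ne h, h]

theorem signedPermMatrix_injective :
    Function.Injective (signedPermMatrix : _ → Matrix (Fin n) (Fin n) ℤ) := by
  rintro ⟨σ, ε⟩ ⟨τ, δ⟩ h
  have hrow (i : Fin n) : τ i = σ i ∧ (ε i : ℤ) = δ i := by
    have hi := congrFun (congrFun h i) (σ i)
    by_cases hτ : τ i = σ i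
    · exact ⟨hτ, by simpa [signedPermMatrix, hτ] using hi⟩
    · simp [signedPermMatrix, hτ] at hi
  refine Prod.ext (Equiv.ext fun i => (hrow i).1.symm) (funext fun i => Units.ext (hrow i).2)

theorem IsSignedPerm.exists_signedPermMatrix (hM : IsSignedPerm M) :
    ∃ p, signedPermMatrix p = M := by
  obtain ⟨hval, hrow, hcol⟩ := hM
  choose σ hσ hσ' using hrow
  have hinj : Function.Injective σ := fun i j hij =>
    (hcol (σ i)).unique (hσ i) (by rw [hij]; exact hσ j)
  have hunit (i : Fin n) : IsUnit (M i (σ i)) := by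
    rw [Int.isUnit_iff]
    exact (hval i (σ i)).resolve_left (hσ i)
  refine ⟨(Equiv.ofBijective σ (Finite.injective_iff_bijective.mp hinj),
    fun i => (hunit i).unit), ?_⟩
  ext i j
  by_cases h : σ i = j
  · subst h
    simp [signedPermMatrix]
  · have h0 : M i j = 0 := by
      by_contra hne
      exact h (hσ' i j hne).symm
    simp [signedPermMatrix, h, h0]

theorem existsUnique_ne_zero_of_sum_mul_self {f : Fin n → ℤ} (hf : ∑ j, f j * f j = 1) :
    (∀ j, f j = 0 ∨ f j = 1 ∨ f j = -1) ∧ ∃! j, f j ≠ 0 := by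
  have hle (j : Fin n) : f j * f j ≤ 1 :=
    hf ▸ Finset.single_le_sum (f := fun j => f j * f j) (fun i _ => mul_self_nonneg (f i))
      (Finset.mem_univ j)
  have hval (j : Fin n) : f j = 0 ∨ f j = 1 ∨ f j = -1 := by
    have h₁ : f j ≤ 1 := by nlinarith [hle j]
    have h₂ : -1 ≤ f j := by nlinarith [hle j]
    omega
  refine ⟨hval, ?_⟩
  obtain ⟨j, -, hj⟩ := Finset.exists_ne_zero_of_sum_ne_zero (hf.trans_ne one_ne_zero)
  refine ⟨j, left_ne_zero_of_mul hj, fun i hi => ?_⟩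
  by_contra hij
  have hpair := Finset.sum_le_univ_sum_of_nonneg (s := {i, j}) fun k => mul_self_nonneg (f k)
  rw [Finset.sum_pair hij, hf] at hpair
  have h₁ : 0 < f i * f i := mul_self_pos.mpr hi
  have h₂ : 0 < f j * f j := mul_self_pos.mpr (left_ne_zero_of_mul hj)
  omega

theorem isSignedPerm_of_mul_transpose (hM : M * Mᵀ = 1) : IsSignedPerm M := by
  have hrow (i : Fin n) : ∑ j, M i j * M i j = 1 := by
    simpa [Matrix.mul_apply] using congrFun (congrFun hM i) i
  have hcol (j : Fin n) : ∑ i, M i j * M i j = 1 := by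
    have hM' : Mᵀ * M = 1 := mul_eq_one_comm.mp hM
    simpa [Matrix.mul_apply] using congrFun (congrFun hM' j) j
  exact ⟨fun i => (existsUnique_ne_zero_of_sum_mul_self (hrow i)).1,
    fun i => (existsUnique_ne_zero_of_sum_mul_self (hrow i)).2,
    fun j => (existsUnique_ne_zero_of_sum_mul_self (hcol j)).2⟩

end SignedPerm

section Garden

variable {d N : ℕ} {L : Fin N → Matrix (Fin d) (Fin d) ℤ}

theorem GardenRel.mul_transpose_self_s19 (hL : GardenRel L) (I : Fin N) : L I * (L I)ᵀ = 1 := by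
  have h := (hL I I).1
  rw [if_pos rfl, ← two_smul ℤ] at h
  exact smul_right_injective _ two_ne_zero h

theorem GardenRel.mul_left (hL : GardenRel L) {P : Matrix (Fin d) (Fin d) ℤ} (hP : P * Pᵀ = 1) :
    GardenRel fun I => P * L I := by
  have hP' : Pᵀ * P = 1 := mul_eq_one_comm.mp hP
  refine fun I J => ⟨?_, ?_⟩
  · have h : P * L I * (P * L J)ᵀ + P * L J * (P * L I)ᵀ =
        P * (L I * (L J)ᵀ + L J * (L I)ᵀ) * Pᵀ := by
      simp only [transpose_mul, Matrix.mul_add, Matrix.add_mul, Matrix.mul_assoc]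
    rw [h, (hL I J).1]
    split_ifs
    · rw [mul_smul_comm, Matrix.mul_one, smul_mul_assoc, hP]
    · rw [Matrix.mul_zero, Matrix.zero_mul]
  · have h (A B : Matrix (Fin d) (Fin d) ℤ) : (P * A)ᵀ * (P * B) = Aᵀ * B := by
      rw [transpose_mul, Matrix.mul_assoc, ← Matrix.mul_assoc Pᵀ, hP', Matrix.one_mul]
    simpa only [h] using (hL I J).2

end Garden

theorem isAdinkra_iff_gardenRel (L : Fin 4 → Matrix (Fin 4) (Fin 4) ℤ) :
    IsAdinkra L ↔ GardenRel L :=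
  ⟨And.right, fun h => ⟨fun I => isSignedPerm_of_mul_transpose (h.mul_transpose_self_s19 I), h⟩⟩

theorem SG_eq_trace (L L' : Fin 4 → Matrix (Fin 4) (Fin 4) ℤ) :
    SG L L' = trace (halfGadget L * halfGadget L') := by
  simp only [SG, halfGadget, Finset.sum_mul]
  simp only [Finset.mul_sum, trace_sum]
  refine Finset.sum_congr rfl fun I₁ _ => Finset.sum_congr rfl fun J₁ _ =>
    Finset.sum_congr rfl fun I₂ _ => Finset.sum_congr rfl fun J₂ _ => ?_
  by_cases h₁ : I₁ < J₁ <;> by_cases h₂ : I₂ < J₂ <;> simp [h₁, h₂, Matrix.mul_assoc]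

theorem halfGadget_mul_left {P : Matrix (Fin 4) (Fin 4) ℤ} (hP : P * Pᵀ = 1)
    (L : Fin 4 → Matrix (Fin 4) (Fin 4) ℤ) :
    halfGadget (fun I => P * L I) = halfGadget L := by
  have h (I J : Fin 4) : (P * L I)ᵀ * (P * L J) = (L I)ᵀ * L J := by
    rw [transpose_mul, Matrix.mul_assoc, ← Matrix.mul_assoc Pᵀ, mul_eq_one_comm.mp hP,
      Matrix.one_mul]
  simp only [halfGadget, h]

section QuaternionUnit

theorem transpose_quaternionUnit (χ : Bool) (k : Fin 3) :
    (quaternionUnit χ k)ᵀ = -quaternionUnit χ k := by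
  revert χ k
  decide +kernel

theorem quaternionUnit_anticomm (χ : Bool) (k l : Fin 3) :
    quaternionUnit χ k * quaternionUnit χ l + quaternionUnit χ l * quaternionUnit χ k =
      if k = l then (-2 : ℤ) • 1 else 0 := by
  revert χ k l
  decide +kernel

theorem eq_and_ne_of_quaternionUnit_anticomm {χ χ' : Bool} {k l : Fin 3}
    (h : quaternionUnit χ k * quaternionUnit χ' l + quaternionUnit χ' l * quaternionUnit χ k = 0) :
    χ = χ' ∧ k ≠ l := by
  revert χ χ' k l
  decide +kernel

theorem smul_quaternionUnit_inj {χ χ' : Bool} {k l : Fin 3} {s t : ℤˣ}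
    (h : (s : ℤ) • quaternionUnit χ k = (t : ℤ) • quaternionUnit χ' l) :
    χ = χ' ∧ k = l ∧ s = t := by
  revert χ χ' k l s t
  decide +kernel

theorem trace_quaternionUnit_mul (χ χ' : Bool) (k l : Fin 3) :
    trace (quaternionUnit χ k * quaternionUnit χ' l) = if χ = χ' ∧ k = l then -4 else 0 := by
  revert χ χ' k l
  decide +kernel

theorem quaternionUnit_mul_dihedralPerm (χ : Bool) (o : Bool × Fin 3) :
    let E := fun i => quaternionUnit χ (dihedralPerm o i)
    let e : ℤ := if o.1 then 1 else -1
    E 0 * E 1 = e • E 2 ∧ E 0 * E 2 = -e • E 1 ∧ E 1 * E 2 = e • E 0 := by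
  revert χ o
  decide +kernel

/-- The skew-symmetric signed permutation matrices are the quaternion units up to sign. -/
theorem exists_smul_quaternionUnit {Y : Matrix (Fin 4) (Fin 4) ℤ} (hskew : Yᵀ = -Y)
    (horth : Y * Yᵀ = 1) : ∃ χ k, ∃ s : ℤˣ, Y = (s : ℤ) • quaternionUnit χ k := by
  have key : ∀ a ∈ ({0, 1, -1} : Finset ℤ), ∀ b ∈ ({0, 1, -1} : Finset ℤ),
      ∀ c ∈ ({0, 1, -1} : Finset ℤ), a * a + b * b + c * c = 1 →
      ∀ d ∈ ({0, 1, -1} : Finset ℤ), ∀ e ∈ ({0, 1, -1} : Finset ℤ),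
      ∀ f ∈ ({0, 1, -1} : Finset ℤ), a * a + d * d + e * e = 1 → b * b + d * d + f * f = 1 →
      c * c + e * e + f * f = 1 →
      ∃ χ k, ∃ s : ℤˣ, !![0, a, b, c; -a, 0, d, e; -b, -d, 0, f; -c, -e, -f, 0] =
        (s : ℤ) • quaternionUnit χ k := by
    decide +kernel
  have hmem (i j : Fin 4) : Y i j ∈ ({0, 1, -1} : Finset ℤ) := by
    simpa using (isSignedPerm_of_mul_transpose horth).1 i j
  have hswap (i j : Fin 4) : Y j i = -Y i j := congrFun (congrFun hskew i) j
  have hdiag (i : Fin 4) : Y i i = 0 := by have := hswap i i; omega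
  have hrow (i : Fin 4) : ∑ j, Y i j * Y i j = 1 := by
    simpa [Matrix.mul_apply] using congrFun (congrFun horth i) i
  have hY : Y = !![0, Y 0 1, Y 0 2, Y 0 3; -Y 0 1, 0, Y 1 2, Y 1 3;
      -Y 0 2, -Y 1 2, 0, Y 2 3; -Y 0 3, -Y 1 3, -Y 2 3, 0] := by
    simp only [← hswap]
    ext i j
    fin_cases i <;> fin_cases j <;> simp [hdiag]
  have h₀ := hrow 0
  have h₁ := hrow 1
  have h₂ := hrow 2
  have h₃ := hrow 3
  simp only [Fin.sum_univ_four, hdiag, hswap 0 1, hswap 0 2, hswap 0 3, hswap 1 2, hswap 1 3,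
    hswap 2 3] at h₀ h₁ h₂ h₃
  rw [hY]
  exact key _ (hmem 0 1) _ (hmem 0 2) _ (hmem 0 3) (by linarith) _ (hmem 1 2) _ (hmem 1 3)
    _ (hmem 2 3) (by linarith) (by linarith) (by linarith)

end QuaternionUnit

theorem gardenRel_codeMatrix (c : AdinkraCode) : GardenRel (codeMatrix c) := by
  obtain ⟨χ, o, s⟩ := c
  have hzero : codeMatrix (χ, o, s) 0 = 1 := rfl
  have hsucc (i : Fin 3) : codeMatrix (χ, o, s) i.succ =
    (s i : ℤ) • quaternionUnit χ (dihedralPerm o i) := rfl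
  have hpair (i j : Fin 3) : (s i : ℤ) • quaternionUnit χ (dihedralPerm o i) *
        ((s j : ℤ) • -quaternionUnit χ (dihedralPerm o j)) +
      (s j : ℤ) • quaternionUnit χ (dihedralPerm o j) *
        ((s i : ℤ) • -quaternionUnit χ (dihedralPerm o i)) =
      if i = j then (2 : ℤ) • 1 else 0 := by
    have h := quaternionUnit_anticomm χ (dihedralPerm o i) (dihedralPerm o j)
    simp only [(dihedralPerm o).apply_eq_iff_eq] at h
    simp only [smul_mul_assoc, mul_smul_comm, Matrix.mul_neg, smul_neg, smul_smul]
    rw [mul_comm (s j : ℤ), ← neg_add, ← smul_add, h]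
    rcases eq_or_ne i j with rfl | hij
    · rw [if_pos rfl, if_pos rfl, Int.units_coe_mul_self, one_smul, neg_smul, neg_neg]
    · simp [hij]
  intro I J
  cases I using Fin.cases <;> cases J using Fin.cases
  · simp [hzero, two_smul]
  · simp [-zsmul_eq_mul, hzero, hsucc, transpose_quaternionUnit, (Fin.succ_ne_zero _).symm]
  · simp [-zsmul_eq_mul, hzero, hsucc, transpose_quaternionUnit]
  · rename_i i j
    simp only [hsucc, transpose_smul, transpose_quaternionUnit, Fin.succ_inj, hpair, true_and]
    rw [← hpair i j]
    simp only [smul_mul_assoc, mul_smul_comm, Matrix.mul_neg, Matrix.neg_mul, smul_neg]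
    rw [smul_comm (s i : ℤ), smul_comm (s i : ℤ)]

theorem codeMatrix_injective : Function.Injective codeMatrix := by
  rintro ⟨χ, o, s⟩ ⟨χ', o', s'⟩ h
  have hi (i : Fin 3) := smul_quaternionUnit_inj (congrFun h i.succ)
  have ho : ∀ o o', (∀ i, dihedralPerm o i = dihedralPerm o' i) → o = o' := by decide
  obtain rfl : χ = χ' := (hi 0).1
  obtain rfl : o = o' := ho o o' fun i => (hi i).2.1
  obtain rfl : s = s' := funext fun i => (hi i).2.2
  rfl

theorem exists_codeMatrix {X : Fin 4 → Matrix (Fin 4) (Fin 4) ℤ} (hX : GardenRel X)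
    (hX0 : X 0 = 1) : ∃ c, codeMatrix c = X := by
  have hskew (i : Fin 3) : (X i.succ)ᵀ = -X i.succ := by
    have h := (hX 0 i.succ).1
    rw [if_neg (Fin.succ_ne_zero i).symm, hX0, Matrix.one_mul, transpose_one,
      Matrix.mul_one] at h
    exact eq_neg_of_add_eq_zero_left h
  choose χ k s hY using fun i : Fin 3 =>
    exists_smul_quaternionUnit (hskew i) (hX.mul_transpose_self_s19 i.succ)
  have hpair (i j : Fin 3) (hij : i ≠ j) : χ i = χ j ∧ k i ≠ k j := by
    apply eq_and_ne_of_quaternionUnit_anticomm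
    have h := (hX i.succ j.succ).1
    rw [if_neg (by simpa using hij), hskew, hskew, hY, hY] at h
    simp only [smul_mul_assoc, mul_smul_comm, Matrix.mul_neg, smul_neg, smul_smul] at h
    rw [mul_comm (s j : ℤ), ← neg_add, ← smul_add, neg_eq_zero] at h
    exact (smul_eq_zero.mp h).resolve_left (mul_ne_zero (s i).ne_zero (s j).ne_zero)
  have horder : ∀ k : Fin 3 → Fin 3, (∀ i j, i ≠ j → k i ≠ k j) →
      ∃ o, ∀ i, dihedralPerm o i = k i := by decide +kernel
  obtain ⟨o, ho⟩ := horder k fun i j hij => (hpair i j hij).2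
  have hχ (i : Fin 3) : χ 0 = χ i := by
    rcases eq_or_ne 0 i with rfl | hi
    · rfl
    · exact (hpair 0 i hi).1
  refine ⟨(χ 0, o, s), funext fun I => ?_⟩
  cases I using Fin.cases with
  | zero => exact hX0.symm
  | succ i =>
    rw [hY i, ← ho, ← hχ i]
    rfl

theorem halfGadget_codeMatrix (c : AdinkraCode) :
    halfGadget (codeMatrix c) = ∑ k, orderVector c.2 k • quaternionUnit c.1 k := by
  obtain ⟨χ, o, s⟩ := c
  obtain ⟨h₀₁, h₀₂, h₁₂⟩ := quaternionUnit_mul_dihedralPerm χ o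
  have hsucc (i : Fin 3) : codeMatrix (χ, o, s) i.succ =
    (s i : ℤ) • quaternionUnit χ (dihedralPerm o i) := rfl
  have hsum : halfGadget (codeMatrix (χ, o, s)) =
      codeMatrix (χ, o, s) (Fin.succ 0) + codeMatrix (χ, o, s) (Fin.succ 1) +
      codeMatrix (χ, o, s) (Fin.succ 2) +
      (codeMatrix (χ, o, s) (Fin.succ 0))ᵀ * codeMatrix (χ, o, s) (Fin.succ 1) +
      (codeMatrix (χ, o, s) (Fin.succ 0))ᵀ * codeMatrix (χ, o, s) (Fin.succ 2) +
      (codeMatrix (χ, o, s) (Fin.succ 1))ᵀ * codeMatrix (χ, o, s) (Fin.succ 2) := by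
    have hzero : codeMatrix (χ, o, s) 0 = 1 := rfl
    simp [halfGadget, Fin.sum_univ_four, hzero, add_assoc]
  rw [hsum, ← Equiv.sum_comp (dihedralPerm o)]
  simp only [hsucc, transpose_smul, transpose_quaternionUnit, smul_mul_assoc, mul_smul_comm,
    Matrix.neg_mul, h₀₁, h₀₂, h₁₂, Fin.sum_univ_three, orderVector, Equiv.symm_apply_apply,
    orderCoeff]
  obtain ⟨_ | _, r⟩ := o <;> simp [-zsmul_eq_mul] <;> module

theorem SG_codeMatrix (c c' : AdinkraCode) :
    SG (codeMatrix c) (codeMatrix c') =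
      vectorGadget c.1 c'.1 (orderVector c.2) (orderVector c'.2) := by
  rw [SG_eq_trace, halfGadget_codeMatrix, halfGadget_codeMatrix]
  simp only [Finset.sum_mul, Finset.mul_sum, trace_sum, smul_mul_assoc, mul_smul_comm,
    trace_smul, trace_quaternionUnit_mul, vectorGadget]
  split_ifs with h
  · simp [h, Fin.sum_univ_three]
    ring
  · simp [h]

/-- The adinkra obtained by multiplying that of a code by a signed permutation matrix. -/
def adinkraOfCode (x : (Equiv.Perm (Fin 4) × (Fin 4 → ℤˣ)) × AdinkraCode) : Adinkra41 :=
  ⟨fun I => signedPermMatrix x.1 * codeMatrix x.2 I, (isAdinkra_iff_gardenRel _).mpr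
    ((gardenRel_codeMatrix x.2).mul_left (signedPermMatrix_mul_transpose x.1))⟩

theorem adinkraOfCode_bijective : Function.Bijective adinkraOfCode := by
  constructor
  · rintro ⟨p, c⟩ ⟨p', c'⟩ h
    have hI (I : Fin 4) : signedPermMatrix p * codeMatrix c I =
        signedPermMatrix p' * codeMatrix c' I := congrFun (congrArg Subtype.val h) I
    obtain rfl : p = p' := signedPermMatrix_injective (by simpa [codeMatrix] using hI 0)
    have hp := mul_eq_one_comm.mp (signedPermMatrix_mul_transpose p)
    obtain rfl : c = c' := codeMatrix_injective <| funext fun I => by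
      simpa [← Matrix.mul_assoc, hp] using congrArg ((signedPermMatrix p)ᵀ * ·) (hI I)
    rfl
  · rintro ⟨L, hL⟩
    obtain ⟨p, hp⟩ := (hL.1 0).exists_signedPermMatrix
    have hp₁ := signedPermMatrix_mul_transpose p
    have hp₂ := mul_eq_one_comm.mp hp₁
    obtain ⟨c, hc⟩ := exists_codeMatrix (hL.2.mul_left (P := (signedPermMatrix p)ᵀ) (by simpa))
      (by rw [← hp, hp₂])
    refine ⟨(p, c), Subtype.ext (funext fun I => ?_)⟩
    simp [adinkraOfCode, hc, ← Matrix.mul_assoc, hp₁]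

theorem SG_adinkraOfCode (x y : (Equiv.Perm (Fin 4) × (Fin 4 → ℤˣ)) × AdinkraCode) :
    SG (adinkraOfCode x).1 (adinkraOfCode y).1 =
      vectorGadget x.2.1 y.2.1 (orderVector x.2.2) (orderVector y.2.2) := by
  rw [← SG_codeMatrix, SG_eq_trace, SG_eq_trace]
  simp only [adinkraOfCode, halfGadget_mul_left (signedPermMatrix_mul_transpose _)]

theorem sum_comp_orderVector (F : (Fin 3 → ℤ) → ℕ) :
    ∑ d, F (orderVector d) = ∑ w ∈ orderVectors, orderMultiplicity w * F w := by
  have hmem : ∀ d ∈ Finset.univ, orderVector d ∈ orderVectors := by decide +kernel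
  have hcard : ∀ w ∈ orderVectors,
      Finset.card {d | orderVector d = w} = orderMultiplicity w := by decide +kernel
  rw [← Finset.sum_fiberwise_of_maps_to hmem]
  refine Finset.sum_congr rfl fun w hw => ?_
  rw [← hcard w hw, Finset.card_eq_sum_ones, Finset.sum_mul]
  refine Finset.sum_congr rfl fun d hd => ?_
  rw [(Finset.mem_filter.mp hd).2, one_mul]

theorem sum_prod_comp_snd {B X D : Type*} [Fintype B] [Fintype X] [Fintype D]
    (F : X → D → X → D → ℕ) :
    ∑ q : (B × X × D) × (B × X × D), F q.1.2.1 q.1.2.2 q.2.2.1 q.2.2.2 =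
      Fintype.card B ^ 2 * ∑ x, ∑ d, ∑ x', ∑ d', F x d x' d' := by
  simp only [Fintype.sum_prod_type, Finset.sum_const, Finset.card_univ, smul_eq_mul,
    ← Finset.mul_sum]
  ring

theorem card_SG_eq (v : ℤ) :
    Nat.card {p : Adinkra41 × Adinkra41 // SG p.1.1 p.2.1 = v} =
      384 ^ 2 * ∑ χ, ∑ w ∈ orderVectors, orderMultiplicity w *
        ∑ χ', ∑ w' ∈ orderVectors, orderMultiplicity w' *
          if vectorGadget χ χ' w w' = v then 1 else 0 := by
  have hB : Fintype.card (Equiv.Perm (Fin 4) × (Fin 4 → ℤˣ)) = 384 := by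
    simp [Fintype.card_perm, Nat.factorial]
  let e := Equiv.ofBijective _ adinkraOfCode_bijective
  rw [← Nat.card_congr ((e.prodCongr e).subtypeEquiv (p := fun q =>
      vectorGadget q.1.2.1 q.2.2.1 (orderVector q.1.2.2) (orderVector q.2.2.2) = v)
      fun q => by rw [← SG_adinkraOfCode]; rfl),
    Nat.card_eq_fintype_card, Fintype.card_subtype, Finset.card_filter,
    sum_prod_comp_snd fun χ d χ' d' =>
      if vectorGadget χ χ' (orderVector d) (orderVector d') = v then 1 else 0, hB]
  simp only [← sum_comp_orderVector]

theorem stmt19 :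
    Nat.card {p : Adinkra41 × Adinkra41 // SG p.1.1 p.2.1 = 32} = 14155776 ∧
    Nat.card {p : Adinkra41 × Adinkra41 // SG p.1.1 p.2.1 = -32} = 14155776 ∧
    Nat.card {p : Adinkra41 × Adinkra41 // SG p.1.1 p.2.1 = 16} = 198180864 ∧
    Nat.card {p : Adinkra41 × Adinkra41 // SG p.1.1 p.2.1 = -16} = 198180864 ∧
    Nat.card {p : Adinkra41 × Adinkra41 // SG p.1.1 p.2.1 = 0} = 934281216 := by
  simp only [card_SG_eq]
  decide +kernel
end
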